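/- arXiv:1804.10320 — 5 statements merged into one kernel-verified Lean document; each statement's English description precedes it below -/
import Mathlib

section
/- For every real ℓ ≥ 0, the orthogonal matrix Q_ℓ diagonalises Λ_ℓ: Q_ℓᵀ · Λ_ℓ · Q_ℓ = diag((ℓ−1)·ℓ, ℓ·(ℓ+1), (ℓ+1)·(ℓ+2)). -/
open Matrix

/-- The orthogonal matrix `Q_ℓ` that diagonalises the vector Laplacian. -/
noncomputable def Qmat (ℓ : ℝ) : Matrix (Fin 3) (Fin 3) ℝ :=
  (1 / (Real.sqrt 2 * Real.sqrt (2 * ℓ + 1))) •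
    !![Real.sqrt (ℓ + 1), Real.sqrt (2 * ℓ + 1), -Real.sqrt ℓ;
       Real.sqrt (2 * ℓ), 0, Real.sqrt (2 * (ℓ + 1));
       -Real.sqrt (ℓ + 1), Real.sqrt (2 * ℓ + 1), Real.sqrt ℓ]

/-- The symmetric matrix `Λ_ℓ` coupling the spin components of the vector Laplacian. -/
noncomputable def Lam (ℓ : ℝ) : Matrix (Fin 3) (Fin 3) ℝ :=
  !![ℓ * (ℓ + 1), -Real.sqrt (2 * ℓ * (ℓ + 1)), 0;
     -Real.sqrt (2 * ℓ * (ℓ + 1)), ℓ * (ℓ + 1) + 2, Real.sqrt (2 * ℓ * (ℓ + 1));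
     0, Real.sqrt (2 * ℓ * (ℓ + 1)), ℓ * (ℓ + 1)]

/-- For every real `ℓ ≥ 0`, the orthogonal matrix `Q_ℓ` diagonalises `Λ_ℓ`:
`Q_ℓᵀ · Λ_ℓ · Q_ℓ = diag((ℓ−1)·ℓ, ℓ·(ℓ+1), (ℓ+1)·(ℓ+2))`. -/
theorem Qmat_diagonalises_Lam (ℓ : ℝ) (hℓ : 0 ≤ ℓ) :
    (Qmat ℓ)ᵀ * Lam ℓ * Qmat ℓ =
      Matrix.diagonal ![(ℓ - 1) * ℓ, ℓ * (ℓ + 1), (ℓ + 1) * (ℓ + 2)] := by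
  have h1 : Real.sqrt (2 * ℓ) = Real.sqrt 2 * Real.sqrt ℓ := Real.sqrt_mul (by norm_num) _
  have h2 : Real.sqrt (2 * (ℓ + 1)) = Real.sqrt 2 * Real.sqrt (ℓ + 1) :=
    Real.sqrt_mul (by norm_num) _
  have h3 : Real.sqrt (2 * ℓ * (ℓ + 1)) = Real.sqrt 2 * Real.sqrt ℓ * Real.sqrt (ℓ + 1) := by
    rw [Real.sqrt_mul (by positivity), h1]
  have ha : Real.sqrt ℓ ^ 2 = ℓ := Real.sq_sqrt hℓ
  have hb : Real.sqrt (ℓ + 1) ^ 2 = ℓ + 1 := Real.sq_sqrt (by positivity)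
  have hc : Real.sqrt (2 * ℓ + 1) ^ 2 = 2 * ℓ + 1 := Real.sq_sqrt (by positivity)
  have hs : Real.sqrt 2 ^ 2 = 2 := Real.sq_sqrt (by norm_num)
  have hk : (1 / (Real.sqrt 2 * Real.sqrt (2 * ℓ + 1))) ^ 2 * (2 * (2 * ℓ + 1)) = 1 := by
    rw [div_pow, mul_pow, hc, hs]
    field_simp
  unfold Qmat Lam
  rw [h1, h2, h3]
  generalize 1 / (Real.sqrt 2 * Real.sqrt (2 * ℓ + 1)) = k at *
  generalize Real.sqrt ℓ = a at *
  generalize Real.sqrt (ℓ + 1) = b at *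
  generalize Real.sqrt (2 * ℓ + 1) = c at *
  generalize Real.sqrt 2 = s at *
  clear h1 h2 h3
  ext i j
  fin_cases i <;> fin_cases j <;>
    simp [Matrix.mul_apply, Fin.sum_univ_three, Matrix.diagonal] <;> grind
end

section
/- For every real ℓ ≥ 0, the characteristic polynomial of Λ_ℓ factors as det(x·I − Λ_ℓ) = (x − (ℓ−1)·ℓ)·(x − ℓ·(ℓ+1))·(x − (ℓ+1)·(ℓ+2)); in particular the eigenvalues of Λ_ℓ are λ_{ℓ−1}, λ_ℓ, λ_{ℓ+1} where λ_j := j(j+1). -/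
open Matrix

/-- For every real `ℓ ≥ 0`, the characteristic polynomial of `Λ_ℓ` factors as
`det(x·I − Λ_ℓ) = (x − (ℓ−1)·ℓ)·(x − ℓ·(ℓ+1))·(x − (ℓ+1)·(ℓ+2))`; in particular the
eigenvalues of `Λ_ℓ` are `λ_{ℓ−1}, λ_ℓ, λ_{ℓ+1}` where `λ_j := j(j+1)`. -/
theorem Lam_charpoly_factors (ℓ : ℝ) (hℓ : 0 ≤ ℓ) (x : ℝ) :
    (x • (1 : Matrix (Fin 3) (Fin 3) ℝ) - Lam ℓ).det =
      (x - (ℓ - 1) * ℓ) * (x - ℓ * (ℓ + 1)) * (x - (ℓ + 1) * (ℓ + 2)) := by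
  have hs : Real.sqrt (2 * ℓ * (ℓ + 1)) ^ 2 = 2 * ℓ * (ℓ + 1) :=
    Real.sq_sqrt (by positivity)
  rw [Matrix.det_fin_three]
  unfold Lam
  generalize Real.sqrt (2 * ℓ * (ℓ + 1)) = s at *
  simp [Matrix.one_apply]
  linear_combination (-2 * (x - ℓ * (ℓ + 1))) * hs
end

section
/- For every real α > −1, real ℓ ≥ 0, and natural number n, the coefficients satisfy A_n² + B_{n−1}² + C_n² + D_{n−1}² = 1 (with B_{−1} = D_{−1} = 0 when n = 0). This is the diagonal part of the operator identity C_{α,ℓ}ᵀ·C_{α,ℓ} + R_{α,ℓ}ᵀ·R_{α,ℓ} = I for the conversion and radius-multiplication matrices built from these coefficients. -/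
/-- `A_n` coefficient of the conversion matrix `C_{α,ℓ}`. -/
noncomputable def Acoef (α ℓ : ℝ) (n : ℤ) : ℝ :=
  Real.sqrt ((((n : ℝ) + α + 1) * ((n : ℝ) + α + ℓ + 3 / 2)) /
    ((2 * (n : ℝ) + α + ℓ + 3 / 2) * (2 * (n : ℝ) + α + ℓ + 5 / 2)))

/-- `B_n` coefficient of the conversion matrix `C_{α,ℓ}`; note `B_{−1} = 0`. -/
noncomputable def Bcoef (α ℓ : ℝ) (n : ℤ) : ℝ :=
  -Real.sqrt ((((n : ℝ) + 1) * ((n : ℝ) + ℓ + 3 / 2)) /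
    ((2 * (n : ℝ) + α + ℓ + 5 / 2) * (2 * (n : ℝ) + α + ℓ + 7 / 2)))

/-- `C_n` coefficient of the radius-multiplication matrix `R_{α,ℓ}`. -/
noncomputable def Ccoef (α ℓ : ℝ) (n : ℤ) : ℝ :=
  Real.sqrt ((((n : ℝ) + ℓ + 3 / 2) * ((n : ℝ) + α + ℓ + 3 / 2)) /
    ((2 * (n : ℝ) + α + ℓ + 3 / 2) * (2 * (n : ℝ) + α + ℓ + 5 / 2)))

/-- `D_n` coefficient of the radius-multiplication matrix `R_{α,ℓ}`; note `D_{−1} = 0`. -/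
noncomputable def Dcoef (α ℓ : ℝ) (n : ℤ) : ℝ :=
  Real.sqrt ((((n : ℝ) + 1) * ((n : ℝ) + α + 1)) /
    ((2 * (n : ℝ) + α + ℓ + 5 / 2) * (2 * (n : ℝ) + α + ℓ + 7 / 2)))

/-- Diagonal part of the operator identity `C_{α,ℓ}ᵀ·C_{α,ℓ} + R_{α,ℓ}ᵀ·R_{α,ℓ} = I`:
for `α > −1`, `ℓ ≥ 0`, and every `n : ℕ`,
`A_n² + B_{n−1}² + C_n² + D_{n−1}² = 1` (with `B_{−1} = D_{−1} = 0` when `n = 0`). -/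
theorem conversion_radius_diag_identity (α ℓ : ℝ) (hα : -1 < α) (hℓ : 0 ≤ ℓ) (n : ℕ) :
    Acoef α ℓ n ^ 2 + Bcoef α ℓ ((n : ℤ) - 1) ^ 2
      + Ccoef α ℓ n ^ 2 + Dcoef α ℓ ((n : ℤ) - 1) ^ 2 = 1 := by
  have hn : (0 : ℝ) ≤ n := Nat.cast_nonneg n
  have h1 : 0 < (n : ℝ) + α + 1 := by linarith
  have h2 : 0 < (n : ℝ) + α + ℓ + 3 / 2 := by linarith
  have h3 : 0 < 2 * (n : ℝ) + α + ℓ + 3 / 2 := by linarith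
  have h4 : 0 < 2 * (n : ℝ) + α + ℓ + 5 / 2 := by linarith
  have h5 : 0 < (n : ℝ) + ℓ + 3 / 2 := by linarith
  have hAC : Acoef α ℓ n ^ 2 + Ccoef α ℓ n ^ 2
      = ((n : ℝ) + α + ℓ + 3 / 2) / (2 * (n : ℝ) + α + ℓ + 3 / 2) := by
    unfold Acoef Ccoef
    simp only [Int.cast_natCast]
    rw [Real.sq_sqrt (by positivity), Real.sq_sqrt (by positivity)]
    rw [← add_div, div_eq_div_iff (by positivity) (by positivity)]
    ring
  have hBD : Bcoef α ℓ ((n : ℤ) - 1) ^ 2 + Dcoef α ℓ ((n : ℤ) - 1) ^ 2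
      = (n : ℝ) / (2 * (n : ℝ) + α + ℓ + 3 / 2) := by
    unfold Bcoef Dcoef
    rcases Nat.eq_zero_or_pos n with h0 | h0
    · subst h0
      simp
    · have hn1 : (1 : ℝ) ≤ n := by exact_mod_cast h0
      have e1 : (((n : ℤ) - 1 : ℤ) : ℝ) = (n : ℝ) - 1 := by push_cast; ring
      have k1 : 0 < (n : ℝ) - 1 + 1 := by linarith
      have k2 : 0 < (n : ℝ) - 1 + ℓ + 3 / 2 := by linarith
      have k3 : 0 < (n : ℝ) - 1 + α + 1 := by linarith
      have k4 : 0 < 2 * ((n : ℝ) - 1) + α + ℓ + 5 / 2 := by linarith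
      have k5 : 0 < 2 * ((n : ℝ) - 1) + α + ℓ + 7 / 2 := by linarith
      rw [e1, neg_sq, Real.sq_sqrt (div_nonneg (mul_pos k1 k2).le (mul_pos k4 k5).le),
        Real.sq_sqrt (div_nonneg (mul_pos k1 k3).le (mul_pos k4 k5).le),
        ← add_div, div_eq_div_iff (mul_pos k4 k5).ne' h3.ne']
      ring
  have : ((n : ℝ) + α + ℓ + 3 / 2) / (2 * (n : ℝ) + α + ℓ + 3 / 2)
      + (n : ℝ) / (2 * (n : ℝ) + α + ℓ + 3 / 2) = 1 := by
    rw [← add_div, div_eq_one_iff_eq h3.ne']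
    ring
  linarith
end

section
/- For every real α > −1, real ℓ ≥ 0, and natural number n, writing A_n(α), B_n(α) for the coefficients with parameter α, one has both A_n(α+1)² + B_{n−1}(α+1)² = A_n(α)² + B_n(α)² (with B_{−1} = 0 when n = 0) and A_n(α+1)·B_n(α+1) = B_n(α)·A_{n+1}(α). These are the entrywise forms of the operator identity C_{α+1,ℓ}ᵀ·C_{α+1,ℓ} = C_{α,ℓ}·C_{α,ℓ}ᵀ, both sides representing multiplication by (1−r²) followed by conversion back to the same basis. -/
/-- Entrywise form of the operator identity `C_{α+1,ℓ}ᵀ·C_{α+1,ℓ} = C_{α,ℓ}·C_{α,ℓ}ᵀ`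
(both sides representing multiplication by `1−r²` followed by conversion back to the
same basis): for `α > −1`, `ℓ ≥ 0`, and every `n : ℕ`, one has
`A_n(α+1)² + B_{n−1}(α+1)² = A_n(α)² + B_n(α)²` (with `B_{−1} = 0` when `n = 0`) and
`A_n(α+1)·B_n(α+1) = B_n(α)·A_{n+1}(α)`. -/
theorem conversion_conversion_transpose_identity (α ℓ : ℝ) (hα : -1 < α) (hℓ : 0 ≤ ℓ)
    (n : ℕ) :
    Acoef (α + 1) ℓ n ^ 2 + Bcoef (α + 1) ℓ ((n : ℤ) - 1) ^ 2
        = Acoef α ℓ n ^ 2 + Bcoef α ℓ n ^ 2 ∧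
    Acoef (α + 1) ℓ n * Bcoef (α + 1) ℓ n = Bcoef α ℓ n * Acoef α ℓ ((n : ℤ) + 1) := by
  have hn : (0 : ℝ) ≤ n := Nat.cast_nonneg n
  have h1 : 0 < (n : ℝ) + α + 1 := by linarith
  have h2 : 0 < (n : ℝ) + α + ℓ + 3 / 2 := by linarith
  have h3 : 0 < 2 * (n : ℝ) + α + ℓ + 3 / 2 := by linarith
  have h4 : 0 < 2 * (n : ℝ) + α + ℓ + 5 / 2 := by linarith
  have h5 : 0 < 2 * (n : ℝ) + α + ℓ + 7 / 2 := by linarith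
  have h6 : 0 < 2 * (n : ℝ) + α + ℓ + 9 / 2 := by linarith
  have h7 : 0 < (n : ℝ) + α + 2 := by linarith
  have h8 : 0 < (n : ℝ) + α + ℓ + 5 / 2 := by linarith
  have h9 : 0 < (n : ℝ) + ℓ + 1 / 2 := by linarith
  have h10 : 0 < (n : ℝ) + ℓ + 3 / 2 := by linarith
  have eA : Acoef (α + 1) ℓ n = Real.sqrt ((((n : ℝ) + α + 2) * ((n : ℝ) + α + ℓ + 5 / 2)) /
      ((2 * (n : ℝ) + α + ℓ + 5 / 2) * (2 * (n : ℝ) + α + ℓ + 7 / 2))) := by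
    unfold Acoef; push_cast; congr 3 <;> ring
  have eA1 : Acoef α ℓ ((n : ℤ) + 1) =
      Real.sqrt ((((n : ℝ) + α + 2) * ((n : ℝ) + α + ℓ + 5 / 2)) /
      ((2 * (n : ℝ) + α + ℓ + 7 / 2) * (2 * (n : ℝ) + α + ℓ + 9 / 2))) := by
    unfold Acoef; push_cast; congr 3 <;> ring
  have eB : Bcoef (α + 1) ℓ n = -Real.sqrt ((((n : ℝ) + 1) * ((n : ℝ) + ℓ + 3 / 2)) /
      ((2 * (n : ℝ) + α + ℓ + 7 / 2) * (2 * (n : ℝ) + α + ℓ + 9 / 2))) := by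
    unfold Bcoef; push_cast; congr 4 <;> ring
  have eB1 : Bcoef (α + 1) ℓ ((n : ℤ) - 1) = -Real.sqrt (((n : ℝ) * ((n : ℝ) + ℓ + 1 / 2)) /
      ((2 * (n : ℝ) + α + ℓ + 3 / 2) * (2 * (n : ℝ) + α + ℓ + 5 / 2))) := by
    unfold Bcoef; push_cast; congr 4 <;> ring
  have eA0 : Acoef α ℓ n = Real.sqrt ((((n : ℝ) + α + 1) * ((n : ℝ) + α + ℓ + 3 / 2)) /
      ((2 * (n : ℝ) + α + ℓ + 3 / 2) * (2 * (n : ℝ) + α + ℓ + 5 / 2))) := by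
    unfold Acoef; push_cast; rfl
  have eB0 : Bcoef α ℓ n = -Real.sqrt ((((n : ℝ) + 1) * ((n : ℝ) + ℓ + 3 / 2)) /
      ((2 * (n : ℝ) + α + ℓ + 5 / 2) * (2 * (n : ℝ) + α + ℓ + 7 / 2))) := by
    unfold Bcoef; push_cast; rfl
  rw [eA, eA1, eB, eB1, eA0, eB0]
  constructor
  · rw [neg_sq, neg_sq, Real.sq_sqrt (by positivity), Real.sq_sqrt (by positivity),
      Real.sq_sqrt (by positivity), Real.sq_sqrt (by positivity),
      div_add_div _ _ (by positivity) (by positivity),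
      div_add_div _ _ (by positivity) (by positivity),
      div_eq_div_iff (by positivity) (by positivity)]
    ring
  · rw [mul_neg, neg_mul, ← Real.sqrt_mul (by positivity), ← Real.sqrt_mul (by positivity)]
    congr 2
    rw [div_mul_div_comm, div_mul_div_comm]
    congr 1
    ring
end

section
/- Let ℓ ≥ 1, m, s be integers with |m| ≤ ℓ and |s| ≤ ℓ. Then α_ℓ² + β_ℓ² + β_{ℓ+1}² + ρ_{ℓ,s−1}² + κ_{ℓ,−s}² + κ_{ℓ+1,s−1}² = 1. This is the diagonal entry of the operator identity C_s·C_s + S⁺_{s−1}·S⁻_s = I for the matrices representing multiplication of spin-weighted spherical harmonics by cos θ and sin θ. -/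
/-- Coefficient `α_ℓ = −m·s/(ℓ(ℓ+1))` in the `cos θ` multiplication recurrence. -/
noncomputable def alphaCoef (ℓ m s : ℤ) : ℝ :=
  -((m : ℝ) * (s : ℝ)) / ((ℓ : ℝ) * ((ℓ : ℝ) + 1))

/-- Coefficient `β_ℓ = (1/ℓ)·√((ℓ−m)(ℓ+m)(ℓ−s)(ℓ+s)/((2ℓ−1)(2ℓ+1)))` in the `cos θ`
multiplication recurrence. -/
noncomputable def betaCoef (ℓ m s : ℤ) : ℝ :=
  (1 / (ℓ : ℝ)) * Real.sqrt ((((ℓ : ℝ) - m) * ((ℓ : ℝ) + m) * ((ℓ : ℝ) - s) * ((ℓ : ℝ) + s)) /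
    ((2 * (ℓ : ℝ) - 1) * (2 * (ℓ : ℝ) + 1)))

/-- Coefficient `ρ_{ℓ,s} = m·√((ℓ−s)(ℓ+s+1))/(ℓ(ℓ+1))` in the `sin θ` multiplication
recurrence. -/
noncomputable def rhoCoef (ℓ m s : ℤ) : ℝ :=
  (m : ℝ) * Real.sqrt (((ℓ : ℝ) - s) * ((ℓ : ℝ) + s + 1)) / ((ℓ : ℝ) * ((ℓ : ℝ) + 1))

/-- Coefficient `κ_{ℓ,s} = (1/ℓ)·√((ℓ−m)(ℓ+m)(ℓ−s−1)(ℓ−s)/((2ℓ−1)(2ℓ+1)))` in the `sin θ`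
multiplication recurrence. -/
noncomputable def kappaCoef (ℓ m s : ℤ) : ℝ :=
  (1 / (ℓ : ℝ)) * Real.sqrt ((((ℓ : ℝ) - m) * ((ℓ : ℝ) + m) * ((ℓ : ℝ) - s - 1) * ((ℓ : ℝ) - s)) /
    ((2 * (ℓ : ℝ) - 1) * (2 * (ℓ : ℝ) + 1)))

/-- Diagonal entry of the operator identity `C_s·C_s + S⁺_{s−1}·S⁻_s = I` for the matrices
representing multiplication of spin-weighted spherical harmonics by `cos θ` and `sin θ`:
for integers `ℓ ≥ 1`, `m`, `s` with `|m| ≤ ℓ` and `|s| ≤ ℓ`,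
`α_ℓ² + β_ℓ² + β_{ℓ+1}² + ρ_{ℓ,s−1}² + κ_{ℓ,−s}² + κ_{ℓ+1,s−1}² = 1`. -/
theorem cos_sin_operator_identity (ℓ m s : ℤ) (hℓ : 1 ≤ ℓ) (hm : |m| ≤ ℓ) (hs : |s| ≤ ℓ) :
    alphaCoef ℓ m s ^ 2 + betaCoef ℓ m s ^ 2 + betaCoef (ℓ + 1) m s ^ 2
      + rhoCoef ℓ m (s - 1) ^ 2 + kappaCoef ℓ m (-s) ^ 2
      + kappaCoef (ℓ + 1) m (s - 1) ^ 2 = 1 := by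
  obtain ⟨hm1, hm2⟩ := abs_le.mp hm
  obtain ⟨hs1, hs2⟩ := abs_le.mp hs
  have hk : (0 : ℝ) ≤ ((ℓ : ℝ) + s - 1) * ((ℓ : ℝ) + s) := by
    have h : (0 : ℤ) ≤ (ℓ + s - 1) * (ℓ + s) := by
      rcases eq_or_lt_of_le (show 0 ≤ ℓ + s by omega) with h | h
      · rw [← h]; simp
      · exact mul_nonneg (by omega) (by omega)
    exact_mod_cast h
  have hL : (1 : ℝ) ≤ ℓ := by exact_mod_cast hℓ
  have a1 : (0 : ℝ) ≤ (ℓ : ℝ) + m := by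
    have : (0 : ℤ) ≤ ℓ + m := by omega
    exact_mod_cast this
  have a2 : (0 : ℝ) ≤ (ℓ : ℝ) - m := by
    have : (0 : ℤ) ≤ ℓ - m := by omega
    exact_mod_cast this
  have a3 : (0 : ℝ) ≤ (ℓ : ℝ) + s := by
    have : (0 : ℤ) ≤ ℓ + s := by omega
    exact_mod_cast this
  have a4 : (0 : ℝ) ≤ (ℓ : ℝ) - s := by
    have : (0 : ℤ) ≤ ℓ - s := by omega
    exact_mod_cast this
  unfold alphaCoef betaCoef rhoCoef kappaCoef
  push_cast
  generalize (ℓ : ℝ) = L at *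
  generalize (m : ℝ) = M at *
  generalize (s : ℝ) = S at *
  have d1 : 0 < 2 * L - 1 := by linarith
  have d2 : 0 < 2 * L + 1 := by linarith
  have d3 : 0 < 2 * (L + 1) - 1 := by linarith
  have d4 : 0 < 2 * (L + 1) + 1 := by linarith
  have d5 : 0 < L := by linarith
  have d6 : 0 < L + 1 := by linarith
  have b1 : 0 ≤ L + 1 - M := by linarith
  have b2 : 0 ≤ L + 1 + M := by linarith
  have b3 : 0 ≤ L + 1 - S := by linarith
  have b4 : 0 ≤ L + 1 + S := by linarith
  have b5 : 0 ≤ L + 1 - (S - 1) - 1 := by linarith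
  have b6 : 0 ≤ L + 1 - (S - 1) := by linarith
  have b7 : 0 ≤ L - (S - 1) := by linarith
  have b8 : 0 ≤ L + (S - 1) + 1 := by linarith
  have hk2 : 0 ≤ (L - M) * (L + M) * (L - -S - 1) * (L - -S) := by
    have := mul_nonneg (mul_nonneg a2 a1) hk
    nlinarith [this]
  simp only [mul_pow, div_pow]
  rw [Real.sq_sqrt (by positivity), Real.sq_sqrt (by positivity), Real.sq_sqrt (by positivity),
    Real.sq_sqrt (div_nonneg hk2 (by positivity)), Real.sq_sqrt (by positivity)]
  have e3 : 2 * (L + 1) - 1 = 2 * L + 1 := by ring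
  have e4 : 2 * (L + 1) + 1 = 2 * L + 3 := by ring
  have d4' : 0 < 2 * L + 3 := by linarith
  rw [e3, e4]
  obtain ⟨D, hD⟩ : ∃ D, D = 2 * L - 1 := ⟨_, rfl⟩
  rw [← hD]
  have hD0 : D ≠ 0 := by rw [hD]; exact d1.ne'
  field_simp
  rw [hD]
  ring
end
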